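/- arXiv:1104.0880 — 2 statements merged into one kernel-verified Lean document; each statement's English description precedes it below -/
import Mathlib

section
/- Define Ω₂(γ,K) := J⁻¹K + m·r²·((K·J⁻¹γ)/(‖γ‖² − m·r²·(γ·J⁻¹γ)))·J⁻¹γ on the open set U := {(γ,K) : ‖γ‖² − m·r²·(γ·J⁻¹γ) > 0}, and let {·,·}_Rank2 be the bracket {·,·}_a with coefficient a(γ,K) := K + m·r²·Ω₂ − m·r²·(Ω₂·γ)·γ. Then the characteristic distribution of {·,·}_Rank2 is not involutive: there exist smooth functions f, g and a point p ∈ U such that [X^a_f, X^a_g](p) does not belong to the linear span of {X^a_h(p) : h smooth}. -/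
/-!
For every coefficient `a`, the span of the vectors `X^a_h(p)` is annihilated by the one-form
`α = a · dγ + γ · dK`, because `γ · (a × b + γ × c) = -a · (γ × b)`. Involutivity therefore fails as
soon as `α([X_f, X_g]) ≠ 0`. For linear functions `f = c · γ`, `g = b · K` one finds
`α([X_f, X_g]) = ((∂a/∂K - E)(γ × c)) · (b × γ)`, which vanishes for `a = K`, while for the bracket of
rank two it equals `m r² ((∂Ω₂/∂K)(γ × c)) · (b × γ)`, where `∂Ω₂/∂K` is symmetric and positive
definite. Hence `b = c` not parallel to `γ` always gives a nonzero value.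

The computation is shortest at `p = (e₁, 0)` with `b = c = e₂`: there `a(p) = 0`, so `α` is the first
component of `dK`, and `a` is linear along the line `t ↦ (e₁, t e₃)`. The resulting value is
`-m r² / (I₃ + m r²)`.
-/

open Matrix

noncomputable section

/-- Phase space factor `ℝ³`. -/
abbrev R3 : Type := Fin 3 → ℝ

/-- The ℝ³-valued gradient `∂f/∂γ` (γ is the first factor of the phase space). -/
noncomputable def gradG (f : R3 × R3 → ℝ) (p : R3 × R3) : R3 :=
  fun i => fderiv ℝ f p (Pi.single i 1, 0)

/-- The ℝ³-valued gradient `∂f/∂K` (K is the second factor of the phase space). -/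
noncomputable def gradK (f : R3 × R3 → ℝ) (p : R3 × R3) : R3 :=
  fun i => fderiv ℝ f p (0, Pi.single i 1)

/-- The bracket `{f,g}_a = −a·(f_K × g_K) − γ·(f_K × g_γ − g_K × f_γ)`. -/
noncomputable def nhBracket (a : R3 × R3 → R3) (f g : R3 × R3 → ℝ) (p : R3 × R3) : ℝ :=
  -(a p ⬝ᵥ crossProduct (gradK f p) (gradK g p)) -
    p.1 ⬝ᵥ (crossProduct (gradK f p) (gradG g p) - crossProduct (gradK g p) (gradG f p))

/-- The Hamiltonian vector field `X^a_g = (γ × g_K, a × g_K + γ × g_γ)`. -/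
noncomputable def hamVF (a : R3 × R3 → R3) (g : R3 × R3 → ℝ) (p : R3 × R3) : R3 × R3 :=
  (crossProduct p.1 (gradK g p), crossProduct (a p) (gradK g p) + crossProduct p.1 (gradG g p))

/-- The Lie bracket of vector fields `[X,Y](p) = DY(p)(X(p)) − DX(p)(Y(p))`. -/
noncomputable def lieB (X Y : R3 × R3 → R3 × R3) (p : R3 × R3) : R3 × R3 :=
  fderiv ℝ Y p (X p) - fderiv ℝ X p (Y p)

/-- The inverse of `J = 𝕀 + m r² E`, acting on ℝ³. -/
def Jinv (m r I1 I2 I3 : ℝ) : Matrix (Fin 3) (Fin 3) ℝ :=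
  Matrix.diagonal ![(I1 + m*r^2)⁻¹, (I2 + m*r^2)⁻¹, (I3 + m*r^2)⁻¹]

/-- `Ω₂(γ,K) = J⁻¹K + m r² ((K·J⁻¹γ)/(‖γ‖² − m r² (γ·J⁻¹γ))) J⁻¹γ`. -/
noncomputable def Omega2 (m r I1 I2 I3 : ℝ) (p : R3 × R3) : R3 :=
  Jinv m r I1 I2 I3 *ᵥ p.2 +
    (m*r^2*((p.2 ⬝ᵥ (Jinv m r I1 I2 I3 *ᵥ p.1)) /
      (p.1 ⬝ᵥ p.1 - m*r^2*(p.1 ⬝ᵥ (Jinv m r I1 I2 I3 *ᵥ p.1))))) •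
      (Jinv m r I1 I2 I3 *ᵥ p.1)

/-- The coefficient `a(γ,K) = K + m r² Ω₂ − m r² (Ω₂·γ) γ` of `{·,·}_Rank2`. -/
noncomputable def aR2 (m r I1 I2 I3 : ℝ) (p : R3 × R3) : R3 :=
  p.2 + (m*r^2) • Omega2 m r I1 I2 I3 p -
    (m*r^2*(Omega2 m r I1 I2 I3 p ⬝ᵥ p.1)) • p.1

/-- The `K`-gradient of a function given by a continuous linear form. -/
lemma gradK_clm (L : R3 × R3 →L[ℝ] ℝ) (p : R3 × R3) :
    gradK (fun q => L q) p = fun i => L (0, Pi.single i 1) := by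
  funext i
  simp [gradK]

/-- The `γ`-gradient of a function given by a continuous linear form. -/
lemma gradG_clm (L : R3 × R3 →L[ℝ] ℝ) (p : R3 × R3) :
    gradG (fun q => L q) p = fun i => L (Pi.single i 1, 0) := by
  funext i
  simp [gradG]

/-- The Hamiltonian vector field of the coordinate function `γ₂`. -/
lemma hamVF_gamma (a : R3 × R3 → R3) (q : R3 × R3) :
    hamVF a (fun q => q.1 1) q = (0, ![-q.1 2, 0, q.1 0]) := by
  have hK := gradK_clm ((ContinuousLinearMap.proj (R := ℝ) (φ := fun _ : Fin 3 => ℝ) 1).comp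
    (ContinuousLinearMap.fst ℝ R3 R3)) q
  have hG := gradG_clm ((ContinuousLinearMap.proj (R := ℝ) (φ := fun _ : Fin 3 => ℝ) 1).comp
    (ContinuousLinearMap.fst ℝ R3 R3)) q
  simp only [ContinuousLinearMap.comp_apply, ContinuousLinearMap.proj_apply,
    ContinuousLinearMap.coe_fst'] at hK hG
  simp only [hamVF, hK, hG, cross_apply]
  ext i <;> fin_cases i <;> simp

/-- The Hamiltonian vector field of the coordinate function `K₂`. -/
lemma hamVF_K (a : R3 × R3 → R3) (q : R3 × R3) :
    hamVF a (fun q => q.2 1) q = (![-q.1 2, 0, q.1 0], ![-a q 2, 0, a q 0]) := by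
  have hK := gradK_clm ((ContinuousLinearMap.proj (R := ℝ) (φ := fun _ : Fin 3 => ℝ) 1).comp
    (ContinuousLinearMap.snd ℝ R3 R3)) q
  have hG := gradG_clm ((ContinuousLinearMap.proj (R := ℝ) (φ := fun _ : Fin 3 => ℝ) 1).comp
    (ContinuousLinearMap.snd ℝ R3 R3)) q
  simp only [ContinuousLinearMap.comp_apply, ContinuousLinearMap.proj_apply,
    ContinuousLinearMap.coe_snd'] at hK hG
  simp only [hamVF, hK, hG, cross_apply]
  ext i <;> fin_cases i <;> simp

/-- The first `K`-component of a derivative, read off from a vector field whose first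
`K`-component is linear along the line through `p` with direction `v`. -/
lemma fderiv_snd_zero_of_line {Y : R3 × R3 → R3 × R3} {p v : R3 × R3} {k : ℝ}
    (hY : DifferentiableAt ℝ Y p) (h : ∀ t : ℝ, (Y (p + t • v)).2 0 = k * t) :
    (fderiv ℝ Y p v).2 0 = k := by
  have h1 : HasDerivAt (fun t : ℝ => Y (p + t • v)) (fderiv ℝ Y p v) 0 := by
    have := hY.hasFDerivAt.hasLineDerivAt v
    exact this
  have h2 : HasDerivAt (fun t : ℝ => (Y (p + t • v)).2 0) ((fderiv ℝ Y p v).2 0) 0 :=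
    (hasDerivAt_pi.1 (((ContinuousLinearMap.snd ℝ R3 R3).hasFDerivAt.comp_hasDerivAt 0 h1))) 0
  have h3 : HasDerivAt (fun t : ℝ => (Y (p + t • v)).2 0) k 0 := by
    simp only [h]
    simpa using (hasDerivAt_id (0 : ℝ)).const_mul k
  exact h2.unique h3

lemma differentiableAt_aR2 (m r I1 I2 I3 : ℝ) (p : R3 × R3)
    (hp : p.1 ⬝ᵥ p.1 - m*r^2*(p.1 ⬝ᵥ (Jinv m r I1 I2 I3 *ᵥ p.1)) ≠ 0) :
    DifferentiableAt ℝ (aR2 m r I1 I2 I3) p := by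
  rw [differentiableAt_pi]
  intro i
  simp only [dotProduct, mulVec, Fin.sum_univ_three] at hp
  simp only [aR2, Omega2, Pi.add_apply, Pi.sub_apply, Pi.smul_apply, smul_eq_mul, dotProduct,
    mulVec, Fin.sum_univ_three]
  fun_prop (disch := assumption)

/-- At a point `(e₁, K)` with `a = 0` the characteristic distribution lies in the kernel of the
first component of `dK`. -/
lemma span_hamVF_snd_zero {a : R3 × R3 → R3} {p : R3 × R3} (ha : a p = 0)
    (hp : p.1 = ![1, 0, 0]) {w : R3 × R3}
    (hw : w ∈ Submodule.span ℝ {v : R3 × R3 | ∃ h : R3 × R3 → ℝ,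
      ContDiff ℝ (⊤ : ℕ∞) h ∧ v = hamVF a h p}) : w.2 0 = 0 := by
  induction hw using Submodule.span_induction with
  | mem x hx =>
    obtain ⟨h, -, rfl⟩ := hx
    simp [hamVF, ha, hp, cross_apply]
  | zero => rfl
  | add x y _ _ hx hy => simp [hx, hy]
  | smul c x _ hx => simp [hx]

/-- The coefficient `a` along the line `t ↦ (e₁, t e₃)`. -/
lemma aR2_line (m r I1 I2 I3 t : ℝ) :
    aR2 m r I1 I2 I3 (![1, 0, 0], ![0, 0, t]) =
      ![0, 0, (1 + m*r^2*(I3 + m*r^2)⁻¹) * t] := by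
  have hJ (v : R3) : Jinv m r I1 I2 I3 *ᵥ v =
      ![(I1 + m*r^2)⁻¹ * v 0, (I2 + m*r^2)⁻¹ * v 1, (I3 + m*r^2)⁻¹ * v 2] := by
    ext i
    fin_cases i <;> simp [Jinv, mulVec_diagonal]
  simp only [aR2, Omega2, hJ]
  ext i
  fin_cases i <;> simp [dotProduct, Fin.sum_univ_three]
  ring

/-- The characteristic distribution of the bracket `{·,·}_Rank2` is not involutive. -/
theorem stmt7 (m r I1 I2 I3 : ℝ) (hm : 0 < m) (hr : 0 < r)
    (h1 : 0 < I1) (h2 : 0 < I2) (h3 : 0 < I3) :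
    ∃ f g : R3 × R3 → ℝ, ContDiff ℝ (⊤ : ℕ∞) f ∧ ContDiff ℝ (⊤ : ℕ∞) g ∧
      ∃ p : R3 × R3,
        0 < p.1 ⬝ᵥ p.1 - m*r^2*(p.1 ⬝ᵥ (Jinv m r I1 I2 I3 *ᵥ p.1)) ∧
        lieB (hamVF (aR2 m r I1 I2 I3) f) (hamVF (aR2 m r I1 I2 I3) g) p ∉
          Submodule.span ℝ {v : R3 × R3 | ∃ h : R3 × R3 → ℝ,
            ContDiff ℝ (⊤ : ℕ∞) h ∧ v = hamVF (aR2 m r I1 I2 I3) h p} := by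
  have hmr : 0 < m * r^2 := by positivity
  have hp : 0 < (![1, 0, 0] : R3) ⬝ᵥ ![1, 0, 0] -
      m*r^2*((![1, 0, 0] : R3) ⬝ᵥ (Jinv m r I1 I2 I3 *ᵥ ![1, 0, 0])) := by
    have h : m * r^2 * (I1 + m*r^2)⁻¹ < 1 := by
      rw [← div_eq_mul_inv, div_lt_one (by positivity)]
      linarith
    simpa [Jinv, dotProduct, mulVec_diagonal, Fin.sum_univ_three] using h
  refine ⟨fun q => q.1 1, fun q => q.2 1, by fun_prop, by fun_prop,
    (![1, 0, 0], ![0, 0, 0]), hp, fun hmem => ?_⟩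
  have ha := aR2_line m r I1 I2 I3
  have hda := differentiableAt_aR2 m r I1 I2 I3 (![1, 0, 0], ![0, 0, 0]) hp.ne'
  have hzero := span_hamVF_snd_zero ((ha 0).trans (by simp)) rfl hmem
  rw [lieB, Prod.snd_sub, Pi.sub_apply] at hzero
  have hX : hamVF (aR2 m r I1 I2 I3) (fun q => q.1 1) =
      fun q => (0, ![-q.1 2, 0, q.1 0]) := funext (hamVF_gamma _)
  have hY : hamVF (aR2 m r I1 I2 I3) (fun q => q.2 1) =
      fun q => (![-q.1 2, 0, q.1 0], ![-aR2 m r I1 I2 I3 q 2, 0, aR2 m r I1 I2 I3 q 0]) :=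
    funext (hamVF_K _)
  have hdi (i : Fin 3) := differentiableAt_pi.1 hda i
  rw [fderiv_snd_zero_of_line (k := -(1 + m*r^2*(I3 + m*r^2)⁻¹)),
    fderiv_snd_zero_of_line (k := -1)] at hzero
  · have : 0 < m*r^2*(I3 + m*r^2)⁻¹ := by positivity
    linarith
  · rw [hX]
    refine DifferentiableAt.prodMk (by fun_prop) (differentiableAt_pi.2 fun i => ?_)
    fin_cases i <;> simp <;> fun_prop
  · intro t
    rw [hX, hY]
    simp
  · rw [hY]
    refine DifferentiableAt.prodMk (differentiableAt_pi.2 fun i => ?_)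
      (differentiableAt_pi.2 fun i => ?_)
    · fin_cases i <;> simp <;> fun_prop
    · fin_cases i
      · exact (hdi 2).neg
      · exact differentiableAt_const _
      · exact hdi 0
  · intro t
    rw [hX, hY]
    simp [ha]
    ring

end
end

section
/- Let {·,·}'_Rank0 be the bracket {·,·}_a with coefficient a(γ,K) := K − m·r²·𝕀⁻¹K. Then the characteristic distribution of {·,·}'_Rank0 is not involutive: there exist smooth functions f, g and a point p ∈ ℝ³×ℝ³ such that [X^a_f, X^a_g](p) does not belong to the linear span of {X^a_h(p) : h smooth}. -/
/-!
On `γ ≠ 0` the characteristic distribution is contained in the kernel of the one-form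
`θ = γ · dK + a · dγ`, because `γ · (a × u) + a · (γ × u) = 0`. For `a = K − m r² 𝕀⁻¹ K` its
exterior derivative is `dθ = Σ (m r² / Iᵢ) dγᵢ ∧ dKᵢ`, which does not vanish on the distribution.
Concretely, take `f = K₁`, `g = γ₁` and `p = (e₂, 0)`: there `θ` is the second `K`-coordinate, it
kills every Hamiltonian vector (`span_hamVF_le`), whereas `[X_f, X_g](p) = (0, −(m r² / I₃) e₂)`.
-/

open Matrix

noncomputable section

/-- The inverse of the inertia tensor `𝕀 = diag(I₁,I₂,I₃)`, acting on ℝ³. -/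
def Iinv (I1 I2 I3 : ℝ) : Matrix (Fin 3) (Fin 3) ℝ :=
  Matrix.diagonal ![I1⁻¹, I2⁻¹, I3⁻¹]

/-- The coefficient `a(γ,K) = K − m r² 𝕀⁻¹K` of the bracket `{·,·}'_Rank0`. -/
noncomputable def aR0' (m r I1 I2 I3 : ℝ) (p : R3 × R3) : R3 :=
  p.2 - (m*r^2) • (Iinv I1 I2 I3 *ᵥ p.2)

/-- The coordinate function `K₁`. -/
def coordK : R3 × R3 →L[ℝ] ℝ :=
  (ContinuousLinearMap.proj (R := ℝ) (φ := fun _ : Fin 3 => ℝ) 0).comp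
    (ContinuousLinearMap.snd ℝ R3 R3)

/-- The coordinate function `γ₁`. -/
def coordG : R3 × R3 →L[ℝ] ℝ :=
  (ContinuousLinearMap.proj (R := ℝ) (φ := fun _ : Fin 3 => ℝ) 0).comp
    (ContinuousLinearMap.fst ℝ R3 R3)

/-- The linear vector field `X_{K₁} = (γ × e₁, a × e₁)`, written in coordinates; the parameters
`s`, `t` are the second and third diagonal entries of the linear map `a`. -/
def fieldK (s t : ℝ) : R3 × R3 →ₗ[ℝ] R3 × R3 where
  toFun p := (![0, p.1 2, -p.1 1], ![0, t * p.2 2, -(s * p.2 1)])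
  map_add' p q := by
    ext i <;> fin_cases i <;> simp <;> ring
  map_smul' c p := by
    ext i <;> fin_cases i <;> simp <;> ring

/-- The linear vector field `X_{γ₁} = (0, γ × e₁)`, written in coordinates. -/
def fieldG : R3 × R3 →ₗ[ℝ] R3 × R3 where
  toFun p := (0, ![0, p.1 2, -p.1 1])
  map_add' p q := by
    ext i <;> fin_cases i <;> simp <;> ring
  map_smul' c p := by
    ext i <;> fin_cases i <;> simp

lemma hamVF_coordK (m r I1 I2 I3 : ℝ) :
    hamVF (aR0' m r I1 I2 I3) coordK =
      (fieldK (1 - m * r ^ 2 * I2⁻¹) (1 - m * r ^ 2 * I3⁻¹)).toContinuousLinearMap := by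
  funext p
  ext i <;> fin_cases i <;>
    simp [hamVF, gradK, gradG, coordK, fieldK, aR0', Iinv, cross_apply, mulVec_diagonal] <;> ring

lemma hamVF_coordG (a : R3 × R3 → R3) :
    hamVF a coordG = fieldG.toContinuousLinearMap := by
  funext p
  ext i <;> fin_cases i <;>
    simp [hamVF, gradK, gradG, coordG, fieldG, cross_apply]

/-- At `(e₂, 0)` the characteristic distribution lies in the kernel of `θ`, which there is the
second `K`-coordinate. -/
lemma span_hamVF_le (m r I1 I2 I3 : ℝ) :
    Submodule.span ℝ {v : R3 × R3 | ∃ h : R3 × R3 → ℝ,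
      ContDiff ℝ (⊤ : ℕ∞) h ∧ v = hamVF (aR0' m r I1 I2 I3) h (![0, 1, 0], 0)} ≤
      LinearMap.ker ((LinearMap.proj (R := ℝ) (φ := fun _ : Fin 3 => ℝ) 1).comp
        (LinearMap.snd ℝ R3 R3)) := by
  rw [Submodule.span_le]
  rintro v ⟨h, -, rfl⟩
  simp [hamVF, aR0', cross_apply]

/-- The characteristic distribution of the bracket `{·,·}'_Rank0` is not involutive. -/
theorem stmt9 (m r I1 I2 I3 : ℝ) (hm : 0 < m) (hr : 0 < r)
    (h1 : 0 < I1) (h2 : 0 < I2) (h3 : 0 < I3) :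
    ∃ f g : R3 × R3 → ℝ, ContDiff ℝ (⊤ : ℕ∞) f ∧ ContDiff ℝ (⊤ : ℕ∞) g ∧
      ∃ p : R3 × R3,
        lieB (hamVF (aR0' m r I1 I2 I3) f) (hamVF (aR0' m r I1 I2 I3) g) p ∉
          Submodule.span ℝ {v : R3 × R3 | ∃ h : R3 × R3 → ℝ,
            ContDiff ℝ (⊤ : ℕ∞) h ∧ v = hamVF (aR0' m r I1 I2 I3) h p} := by
  refine ⟨coordK, coordG, coordK.contDiff, coordG.contDiff, (![0, 1, 0], 0), fun hmem => ?_⟩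
  have h := span_hamVF_le m r I1 I2 I3 hmem
  -- Both fields are linear, hence equal to their own derivatives.
  rw [lieB, hamVF_coordK, hamVF_coordG, ContinuousLinearMap.fderiv,
    ContinuousLinearMap.fderiv] at h
  have hpos : 0 < m * r ^ 2 * I3⁻¹ := by positivity
  simp [fieldK, fieldG] at h
  linarith

end
end
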